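/- arXiv:1804.08373 — 2 statements merged into one kernel-verified Lean document; each statement's English description precedes it below -/
import Mathlib

section
/- For closed terms t0, t1 of the calculus λ_S, t0 ≈₂ t1 holds if and only if for all closed contexts C, C[t0] evaluates to a normal form iff C[t1] evaluates to a normal form. (That is, observing termination alone gives the same equivalence as distinguishing evaluation to values from evaluation to control-stuck terms.) -/
namespace LambdaS

/-- Terms of the calculus λ_S: variables, λ-abstractions, applications,
the shift operator `S k.t`, and the reset delimiter `⟨t⟩`. -/
inductive Tm : Type
  | var : ℕ → Tm
  | lam : ℕ → Tm → Tm
  | app : Tm → Tm → Tm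
  | shift : ℕ → Tm → Tm
  | reset : Tm → Tm
  deriving DecidableEq

/-- A variable fresh for a finite set of variables. -/
def fresh (s : Finset ℕ) : ℕ := if h : s.Nonempty then s.max' h + 1 else 0

namespace Tm

/-- Free variables. -/
def fv : Tm → Finset ℕ
  | var x => {x}
  | lam x t => fv t \ {x}
  | app t u => fv t ∪ fv u
  | shift k t => fv t \ {k}
  | reset t => fv t

def size : Tm → ℕ
  | var _ => 1
  | lam _ t => size t + 1
  | app t u => size t + size u + 1
  | shift _ t => size t + 1
  | reset t => size t + 1

/-- Renaming of free occurrences of a variable (used for α-renaming with a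
fresh target variable). -/
def rename : Tm → ℕ → ℕ → Tm
  | var w, y, z => if w = y then var z else var w
  | lam w t, y, z => if w = y then lam w t else lam w (rename t y z)
  | app t u, y, z => app (rename t y z) (rename u y z)
  | shift w t, y, z => if w = y then shift w t else shift w (rename t y z)
  | reset t, y, z => reset (rename t y z)

theorem size_rename (t : Tm) (y z : ℕ) : size (rename t y z) = size t := by
  induction t generalizing y z with
  | var w => simp only [rename]; split <;> rfl
  | lam w t ih => simp only [rename]; split <;> simp [size, ih]
  | app t u iht ihu => simp [rename, size, iht, ihu]
  | shift w t ih => simp only [rename]; split <;> simp [size, ih]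
  | reset t ih => simp [rename, size, ih]

/-- Capture-avoiding substitution `t{v/x}` of `v` for the free occurrences of
`x` in `t`; bound variables are α-renamed when needed. -/
def subst : Tm → ℕ → Tm → Tm
  | var w, x, v => if w = x then v else var w
  | lam y t, x, v =>
      if y = x then lam y t
      else if y ∈ fv v then
        lam (fresh (fv v ∪ fv t ∪ {x}))
          (subst (rename t y (fresh (fv v ∪ fv t ∪ {x}))) x v)
      else lam y (subst t x v)
  | app t u, x, v => app (subst t x v) (subst u x v)
  | shift y t, x, v =>
      if y = x then shift y t
      else if y ∈ fv v then
        shift (fresh (fv v ∪ fv t ∪ {x}))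
          (subst (rename t y (fresh (fv v ∪ fv t ∪ {x}))) x v)
      else shift y (subst t x v)
  | reset t, x, v => reset (subst t x v)
termination_by t _ _ => size t
decreasing_by all_goals simp [size_rename, size] <;> omega

end Tm

/-- Values: variables and λ-abstractions. -/
inductive IsValue : Tm → Prop
  | var (x : ℕ) : IsValue (Tm.var x)
  | lam (x : ℕ) (t : Tm) : IsValue (Tm.lam x t)

/-- A term is closed if it has no free variables. -/
def Closed (t : Tm) : Prop := t.fv = ∅

/-- Pure evaluation contexts E ::= □ | v E | E t. -/
inductive ECtx : Type
  | hole : ECtx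
  | appR : (v : Tm) → IsValue v → ECtx → ECtx
  | appL : ECtx → Tm → ECtx

def ECtx.plug : ECtx → Tm → Tm
  | .hole, t => t
  | .appR v _ E, t => Tm.app v (E.plug t)
  | .appL E u, t => Tm.app (E.plug t) u

def ECtx.fv : ECtx → Finset ℕ
  | .hole => ∅
  | .appR v _ E => v.fv ∪ E.fv
  | .appL E u => E.fv ∪ u.fv

/-- Composition of pure contexts: `(E.comp E').plug t = E.plug (E'.plug t)`. -/
def ECtx.comp : ECtx → ECtx → ECtx
  | .hole, E' => E'
  | .appR v hv E, E' => .appR v hv (E.comp E')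
  | .appL E u, E' => .appL (E.comp E') u

/-- Evaluation contexts F ::= □ | v F | F t | ⟨F⟩. -/
inductive FCtx : Type
  | hole : FCtx
  | appR : (v : Tm) → IsValue v → FCtx → FCtx
  | appL : FCtx → Tm → FCtx
  | reset : FCtx → FCtx

def FCtx.plug : FCtx → Tm → Tm
  | .hole, t => t
  | .appR v _ F, t => Tm.app v (F.plug t)
  | .appL F u, t => Tm.app (F.plug t) u
  | .reset F, t => Tm.reset (F.plug t)

def FCtx.fv : FCtx → Finset ℕ
  | .hole => ∅
  | .appR v _ F => v.fv ∪ F.fv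
  | .appL F u => F.fv ∪ u.fv
  | .reset F => F.fv

/-- The function `λx.⟨E[x]⟩` representing the captured delimited context `E`,
where `x` is chosen fresh (in particular `x ∉ fv E`). -/
def contFun (E : ECtx) : Tm :=
  Tm.lam (fresh E.fv) (Tm.reset (E.plug (Tm.var (fresh E.fv))))

/-- Call-by-value reduction →_v of λ_S. -/
inductive Red : Tm → Tm → Prop
  | beta (F : FCtx) (x : ℕ) (t v : Tm) :
      IsValue v →
      Red (F.plug (Tm.app (Tm.lam x t) v)) (F.plug (t.subst x v))
  | capture (F : FCtx) (E : ECtx) (k : ℕ) (t : Tm) :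
      Red (F.plug (Tm.reset (E.plug (Tm.shift k t))))
          (F.plug (Tm.reset (t.subst k (contFun E))))
  | resetVal (F : FCtx) (v : Tm) :
      IsValue v →
      Red (F.plug (Tm.reset v)) (F.plug v)

/-- A stuck term: not a value and unable to reduce. -/
def Stuck (t : Tm) : Prop := ¬ IsValue t ∧ ∀ t', ¬ Red t t'

/-- Normal forms: values and stuck terms. -/
def NormalForm (t : Tm) : Prop := IsValue t ∨ Stuck t

/-- A control-stuck term has the form E[S k.t]. -/
def ControlStuck (t : Tm) : Prop :=
  ∃ (E : ECtx) (k : ℕ) (s : Tm), t = E.plug (Tm.shift k s)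

/-- Evaluation: `t ⇓ t'` iff `t →_v* t'` and `t'` is a normal form. -/
def Evals (t t' : Tm) : Prop := Relation.ReflTransGen Red t t' ∧ NormalForm t'

/-- `t` evaluates to some value. -/
def EvalsToValue (t : Tm) : Prop := ∃ v, Relation.ReflTransGen Red t v ∧ IsValue v

/-- `t` evaluates to some control-stuck term. -/
def EvalsToStuck (t : Tm) : Prop :=
  ∃ s, Relation.ReflTransGen Red t s ∧ ControlStuck s

/-- General contexts C ::= □ | λx.C | t C | C t | S k.C | ⟨C⟩. -/
inductive Ctx : Type
  | hole : Ctx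
  | lam : ℕ → Ctx → Ctx
  | appL : Ctx → Tm → Ctx
  | appR : Tm → Ctx → Ctx
  | shift : ℕ → Ctx → Ctx
  | reset : Ctx → Ctx

def Ctx.plug : Ctx → Tm → Tm
  | .hole, t => t
  | .lam x C, t => Tm.lam x (C.plug t)
  | .appL C u, t => Tm.app (C.plug t) u
  | .appR u C, t => Tm.app u (C.plug t)
  | .shift k C, t => Tm.shift k (C.plug t)
  | .reset C, t => Tm.reset (C.plug t)

def Ctx.fv : Ctx → Finset ℕ
  | .hole => ∅
  | .lam x C => C.fv \ {x}
  | .appL C u => C.fv ∪ u.fv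
  | .appR u C => u.fv ∪ C.fv
  | .shift k C => C.fv \ {k}
  | .reset C => C.fv

/-- Contextual equivalence ≈ for the relaxed semantics (on closed terms):
tests evaluation to values and evaluation to control-stuck terms in every
closed context. -/
def CtxEquiv (t0 t1 : Tm) : Prop :=
  ∀ C : Ctx, C.fv = ∅ →
    (EvalsToValue (C.plug t0) ↔ EvalsToValue (C.plug t1)) ∧
    (EvalsToStuck (C.plug t0) ↔ EvalsToStuck (C.plug t1))

/-- Contextual equivalence ≈_p for the original semantics: tests evaluation to
values of ⟨C[·]⟩ in every closed context C. -/
def CtxEquivP (t0 t1 : Tm) : Prop :=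
  ∀ C : Ctx, C.fv = ∅ →
    (EvalsToValue (Tm.reset (C.plug t0)) ↔ EvalsToValue (Tm.reset (C.plug t1)))

/-- Contextual equivalence ≈_E testing only with closed evaluation contexts. -/
def ECtxEquiv (t0 t1 : Tm) : Prop :=
  ∀ F : FCtx, F.fv = ∅ →
    (EvalsToValue (F.plug t0) ↔ EvalsToValue (F.plug t1)) ∧
    (EvalsToStuck (F.plug t0) ↔ EvalsToStuck (F.plug t1))

/-- Applicative simulation. -/
def IsAppSim (R : Tm → Tm → Prop) : Prop :=
  ∀ t0 t1, R t0 t1 →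
    (∀ t0', Red t0 t0' →
      ∃ t1', Relation.ReflTransGen Red t1 t1' ∧ R t0' t1') ∧
    (∀ x t0', t0 = Tm.lam x t0' →
      ∃ t1', Relation.ReflTransGen Red t1 (Tm.lam x t1') ∧
        ∀ v, IsValue v → Closed v → R (t0'.subst x v) (t1'.subst x v)) ∧
    (∀ (E0 : ECtx) (k : ℕ) (t0' : Tm), t0 = E0.plug (Tm.shift k t0') →
      ∃ (E1 : ECtx) (t1' : Tm),
        Relation.ReflTransGen Red t1 (E1.plug (Tm.shift k t1')) ∧
        ∀ E : ECtx, E.fv = ∅ →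
          R (Tm.reset (t0'.subst k (contFun (E.comp E0))))
            (Tm.reset (t1'.subst k (contFun (E.comp E1)))))

/-- Applicative bisimulation. -/
def IsAppBisim (R : Tm → Tm → Prop) : Prop :=
  IsAppSim R ∧ IsAppSim (fun a b => R b a)

/-- Applicative bisimilarity ≈_app: the largest applicative bisimulation. -/
def AppBisim (t0 t1 : Tm) : Prop := ∃ R, IsAppBisim R ∧ R t0 t1

/-- Simultaneous substitution (used only with closing substitutions mapping
variables to closed values, so no capture can occur). -/
def Tm.msubst : Tm → (ℕ → Tm) → Tm
  | .var x, σ => σ x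
  | .lam x t, σ => Tm.lam x (t.msubst (Function.update σ x (Tm.var x)))
  | .app t u, σ => Tm.app (t.msubst σ) (u.msubst σ)
  | .shift k t, σ => Tm.shift k (t.msubst (Function.update σ k (Tm.var k)))
  | .reset t, σ => Tm.reset (t.msubst σ)

/-- Open extension of a relation on closed terms: relate `t0σ` and `t1σ` for
every substitution σ mapping variables to closed values. -/
def OpenExt (R : Tm → Tm → Prop) (t0 t1 : Tm) : Prop :=
  ∀ σ : ℕ → Tm, (∀ x, IsValue (σ x) ∧ Closed (σ x)) →
    R (t0.msubst σ) (t1.msubst σ)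

/-- ω := λx.x x. -/
def omegaTm : Tm := Tm.lam 0 (Tm.app (Tm.var 0) (Tm.var 0))

/-- Ω := ω ω, a diverging term. -/
def OmegaTm : Tm := Tm.app omegaTm omegaTm


/-! ### Free variables -/

theorem fv_rename (t : Tm) (y z : ℕ) : (t.rename y z).fv ⊆ (t.fv \ {y}) ∪ {z} := by
  induction t with
  | var w => simp only [Tm.rename]; split <;> intro a <;> simp_all [Tm.fv]
  | lam w t ih =>
    simp only [Tm.rename]; split
    · intro a; simp_all [Tm.fv]
    · intro a ha
      simp only [Tm.fv, Finset.mem_sdiff, Finset.mem_union, Finset.mem_singleton] at ha ⊢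
      have := ih ha.1
      simp only [Finset.mem_sdiff, Finset.mem_union, Finset.mem_singleton] at this
      tauto
  | app t u iht ihu =>
    intro a ha
    simp only [Tm.rename, Tm.fv, Finset.mem_sdiff, Finset.mem_union, Finset.mem_singleton] at ha ⊢
    have h1 := @iht a
    have h2 := @ihu a
    simp only [Finset.mem_sdiff, Finset.mem_union, Finset.mem_singleton] at h1 h2
    tauto
  | shift w t ih =>
    simp only [Tm.rename]; split
    · intro a; simp_all [Tm.fv]
    · intro a ha
      simp only [Tm.fv, Finset.mem_sdiff, Finset.mem_union, Finset.mem_singleton] at ha ⊢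
      have := ih ha.1
      simp only [Finset.mem_sdiff, Finset.mem_union, Finset.mem_singleton] at this
      tauto
  | reset t ih => simpa [Tm.rename, Tm.fv] using ih

theorem fv_subst_aux (n : ℕ) : ∀ (t : Tm) (x : ℕ) (v : Tm), t.size ≤ n →
    (t.subst x v).fv ⊆ (t.fv \ {x}) ∪ v.fv := by
  induction n with
  | zero => intro t x v h; cases t <;> simp [Tm.size] at h
  | succ n ih =>
    intro t x v h
    have binder : ∀ (y : ℕ) (t : Tm), t.size ≤ n → ∀ z,
        ((t.rename y z).subst x v).fv \ {z} ⊆ ((t.fv \ {y}) \ {x}) ∪ v.fv := by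
      intro y t ht z a ha
      have h1 := @ih (t.rename y z) x v (by rw [Tm.size_rename]; exact ht) a
      have h2 := @fv_rename t y z a
      simp only [Finset.mem_sdiff, Finset.mem_union, Finset.mem_singleton] at ha h1 h2 ⊢
      tauto
    have plain : ∀ (y : ℕ) (t : Tm), t.size ≤ n →
        (t.subst x v).fv \ {y} ⊆ ((t.fv \ {y}) \ {x}) ∪ v.fv := by
      intro y t ht a ha
      have h1 := @ih t x v ht a
      simp only [Finset.mem_sdiff, Finset.mem_union, Finset.mem_singleton] at ha h1 ⊢
      tauto
    cases t with
    | var w => rw [Tm.subst]; split <;> intro a <;> simp_all [Tm.fv]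
    | lam y t =>
      have ht : t.size ≤ n := by simp [Tm.size] at h; omega
      rw [Tm.subst]; split
      · intro a; simp_all [Tm.fv]
      · split
        · exact binder y t ht _
        · exact plain y t ht
    | shift y t =>
      have ht : t.size ≤ n := by simp [Tm.size] at h; omega
      rw [Tm.subst]; split
      · intro a; simp_all [Tm.fv]
      · split
        · exact binder y t ht _
        · exact plain y t ht
    | app t u =>
      have ht : t.size ≤ n := by simp [Tm.size] at h; omega
      have hu : u.size ≤ n := by simp [Tm.size] at h; omega
      rw [Tm.subst]
      intro a
      have h1 := @ih t x v ht a
      have h2 := @ih u x v hu a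
      simp only [Tm.fv, Finset.mem_sdiff, Finset.mem_union, Finset.mem_singleton] at h1 h2 ⊢
      tauto
    | reset t =>
      have ht : t.size ≤ n := by simp [Tm.size] at h; omega
      rw [Tm.subst]
      exact ih t x v ht

theorem fv_subst (t : Tm) (x : ℕ) (v : Tm) : (t.subst x v).fv ⊆ (t.fv \ {x}) ∪ v.fv :=
  fv_subst_aux _ t x v le_rfl

theorem fv_eplug (E : ECtx) (t : Tm) : (E.plug t).fv = E.fv ∪ t.fv := by
  induction E with
  | hole => simp [ECtx.plug, ECtx.fv]
  | appR v _ E ih => simp [ECtx.plug, ECtx.fv, Tm.fv, ih]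
  | appL E u ih =>
    simp only [ECtx.plug, ECtx.fv, Tm.fv, ih]; ext a; simp only [Finset.mem_union]; tauto

theorem fv_fplug (F : FCtx) (t : Tm) : (F.plug t).fv = F.fv ∪ t.fv := by
  induction F with
  | hole => simp [FCtx.plug, FCtx.fv]
  | appR v _ E ih => simp [FCtx.plug, FCtx.fv, Tm.fv, ih]
  | appL E u ih =>
    simp only [FCtx.plug, FCtx.fv, Tm.fv, ih]; ext a; simp only [Finset.mem_union]; tauto
  | reset F ih => simpa [FCtx.plug, FCtx.fv, Tm.fv] using ih

theorem fv_cplug (C : Ctx) (t : Tm) : (C.plug t).fv ⊆ C.fv ∪ t.fv := by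
  induction C with
  | hole => simp [Ctx.plug, Ctx.fv]
  | lam x C ih | shift x C ih | appL C u ih | appR u C ih | reset C ih =>
    intro a
    have := @ih a
    simp only [Ctx.plug, Ctx.fv, Tm.fv, Finset.mem_sdiff, Finset.mem_union,
      Finset.mem_singleton] at this ⊢
    tauto

theorem fv_contFun (E : ECtx) : (contFun E).fv ⊆ E.fv := by
  intro a
  simp only [contFun, Tm.fv, fv_eplug, Finset.mem_sdiff, Finset.mem_union, Finset.mem_singleton]
  tauto

theorem red_fv {t t' : Tm} (h : Red t t') : t'.fv ⊆ t.fv := by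
  cases h with
  | beta F x t v hv =>
    intro a
    have := @fv_subst t x v a
    simp only [fv_fplug, Tm.fv, Finset.mem_sdiff, Finset.mem_union, Finset.mem_singleton] at this ⊢
    tauto
  | capture F E k t =>
    intro a
    have h1 := @fv_subst t k (contFun E) a
    have h2 := @fv_contFun E a
    simp only [fv_fplug, fv_eplug, Tm.fv, Finset.mem_sdiff, Finset.mem_union,
      Finset.mem_singleton] at h1 h2 ⊢
    tauto
  | resetVal F v hv => simp [fv_fplug, Tm.fv]

theorem reds_closed {t t' : Tm} (h : Relation.ReflTransGen Red t t') (ht : Closed t) :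
    Closed t' := by
  induction h with
  | refl => exact ht
  | tail _ h ih =>
    unfold Closed at *
    exact Finset.subset_empty.1 (ih ▸ red_fv h)

/-! ### A deterministic step function -/

instance decIsValue : (t : Tm) → Decidable (IsValue t)
  | .var x => isTrue (.var x)
  | .lam x t => isTrue (.lam x t)
  | .app _ _ => isFalse (fun h => by cases h)
  | .shift _ _ => isFalse (fun h => by cases h)
  | .reset _ => isFalse (fun h => by cases h)

theorem not_value_app (t u : Tm) : ¬ IsValue (.app t u) := fun h => by cases h
theorem not_value_shift (k : ℕ) (u : Tm) : ¬ IsValue (.shift k u) := fun h => by cases h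
theorem not_value_reset (u : Tm) : ¬ IsValue (.reset u) := fun h => by cases h

/-- Decomposition of control-stuck terms. -/
def stk : Tm → Option (ECtx × ℕ × Tm)
  | .var _ => none
  | .lam _ _ => none
  | .reset _ => none
  | .shift k t => some (.hole, k, t)
  | .app t u =>
      if h : IsValue t then (stk u).map (fun p => (.appR t h p.1, p.2))
      else (stk t).map (fun p => (.appL p.1 u, p.2))

/-- Contraction of an application of values. -/
def betaStep : Tm → Tm → Option Tm
  | .lam x b, u => some (b.subst x u)
  | _, _ => none

/-- One reduction step, as a function. -/
def step : Tm → Option Tm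
  | .var _ => none
  | .lam _ _ => none
  | .shift _ _ => none
  | .app t u =>
      if IsValue t then
        if IsValue u then betaStep t u else (step u).map (fun u' => .app t u')
      else (step t).map (fun t' => .app t' u)
  | .reset t =>
      if IsValue t then some t
      else match stk t with
        | some (E, k, s) => some (.reset (s.subst k (contFun E)))
        | none => (step t).map .reset

theorem eplug_not_value (E : ECtx) (t : Tm) (ht : ¬ IsValue t) : ¬ IsValue (E.plug t) := by
  cases E with
  | hole => exact ht
  | appR => exact not_value_app _ _
  | appL => exact not_value_app _ _

theorem fplug_not_value (F : FCtx) (t : Tm) (ht : ¬ IsValue t) : ¬ IsValue (F.plug t) := by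
  cases F with
  | hole => exact ht
  | appR => exact not_value_app _ _
  | appL => exact not_value_app _ _
  | reset => exact not_value_reset _

theorem stk_plug (E : ECtx) (k : ℕ) (s : Tm) : stk (E.plug (.shift k s)) = some (E, k, s) := by
  induction E with
  | hole => rfl
  | appR v hv E ih => simp [ECtx.plug, stk, hv, ih]
  | appL E u ih => simp [ECtx.plug, stk, eplug_not_value E _ (not_value_shift k s), ih]

theorem stk_sound (t : Tm) : ∀ E k s, stk t = some (E, k, s) → t = E.plug (.shift k s) := by
  induction t with
  | var | lam | reset => intro E k s h; simp [stk] at h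
  | shift k t =>
    intro E k s h; simp only [stk, Option.some.injEq, Prod.mk.injEq] at h
    obtain ⟨rfl, rfl, rfl⟩ := h; rfl
  | app t u iht ihu =>
    intro E k s h
    simp only [stk] at h
    split at h
    · simp only [Option.map_eq_some_iff] at h
      obtain ⟨⟨E', k', s'⟩, h1, h2⟩ := h
      simp only [Prod.mk.injEq] at h2
      obtain ⟨rfl, rfl, rfl⟩ := h2
      rw [ihu _ _ _ h1]; rfl
    · simp only [Option.map_eq_some_iff] at h
      obtain ⟨⟨E', k', s'⟩, h1, h2⟩ := h
      simp only [Prod.mk.injEq] at h2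
      obtain ⟨rfl, rfl, rfl⟩ := h2
      rw [iht _ _ _ h1]; rfl

theorem stk_fplug (F : FCtx) (r : Tm) (hr : ¬ IsValue r) (h : stk r = none) :
    stk (F.plug r) = none := by
  induction F with
  | hole => exact h
  | appR v hv F ih => simp [FCtx.plug, stk, hv, ih]
  | appL F u ih => simp [FCtx.plug, stk, fplug_not_value F r hr, ih]
  | reset F ih => rfl

theorem step_fplug (F : FCtx) (r r' : Tm) (hr : ¬ IsValue r) (h : stk r = none)
    (hs : step r = some r') : step (F.plug r) = some (F.plug r') := by
  induction F with
  | hole => exact hs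
  | appR v hv F ih => simp [FCtx.plug, step, hv, ih, fplug_not_value F r hr]
  | appL F u ih => simp [FCtx.plug, step, fplug_not_value F r hr, ih]
  | reset F ih => simp [FCtx.plug, step, fplug_not_value F r hr, stk_fplug F r hr h, ih]

theorem stk_value {v : Tm} (hv : IsValue v) : stk v = none := by cases hv <;> rfl
theorem step_value {v : Tm} (hv : IsValue v) : step v = none := by cases hv <;> rfl

theorem red_step {t t' : Tm} (h : Red t t') : step t = some t' := by
  cases h with
  | beta F x t v hv =>
    refine step_fplug F _ _ (not_value_app _ _) ?_ ?_
    · simp [stk, IsValue.lam x t, stk_value hv]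
    · simp [step, IsValue.lam x t, hv, betaStep]
  | capture F E k t =>
    refine step_fplug F _ _ (not_value_reset _) rfl ?_
    simp [step, eplug_not_value E _ (not_value_shift k t), stk_plug]
  | resetVal F v hv =>
    refine step_fplug F _ _ (not_value_reset _) rfl ?_
    simp [step, hv]

theorem red_appR {v t t' : Tm} (hv : IsValue v) (h : Red t t') :
    Red (.app v t) (.app v t') := by
  cases h with
  | beta F x t w hw => exact Red.beta (.appR v hv F) x t w hw
  | capture F E k t => exact Red.capture (.appR v hv F) E k t
  | resetVal F w hw => exact Red.resetVal (.appR v hv F) w hw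

theorem red_appL {t t' : Tm} (u : Tm) (h : Red t t') : Red (.app t u) (.app t' u) := by
  cases h with
  | beta F x t w hw => exact Red.beta (.appL F u) x t w hw
  | capture F E k t => exact Red.capture (.appL F u) E k t
  | resetVal F w hw => exact Red.resetVal (.appL F u) w hw

theorem red_reset {t t' : Tm} (h : Red t t') : Red (.reset t) (.reset t') := by
  cases h with
  | beta F x t w hw => exact Red.beta (.reset F) x t w hw
  | capture F E k t => exact Red.capture (.reset F) E k t
  | resetVal F w hw => exact Red.resetVal (.reset F) w hw

theorem step_eplug (E : ECtx) (k : ℕ) (s : Tm) : step (E.plug (.shift k s)) = none := by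
  induction E with
  | hole => rfl
  | appR v hv E ih =>
    simp [ECtx.plug, step, hv, ih, eplug_not_value E _ (not_value_shift k s)]
  | appL E u ih => simp [ECtx.plug, step, eplug_not_value E _ (not_value_shift k s), ih]

theorem controlStuck_normal {t : Tm} (h : ControlStuck t) : NormalForm t := by
  obtain ⟨E, k, s, rfl⟩ := h
  refine Or.inr ⟨eplug_not_value E _ (not_value_shift k s), fun t' h => ?_⟩
  have := red_step h
  rw [step_eplug] at this
  cases this

/-- Progress for closed terms. -/
theorem progress (t : Tm) (ht : Closed t) :
    IsValue t ∨ ControlStuck t ∨ ∃ t', Red t t' := by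
  induction t with
  | var x => exact Or.inl (.var x)
  | lam x t => exact Or.inl (.lam x t)
  | shift k t => exact Or.inr (Or.inl ⟨.hole, k, t, rfl⟩)
  | reset t ih =>
    right; right
    rcases ih ht with h | ⟨E, k, s, rfl⟩ | ⟨t', h⟩
    · exact ⟨_, Red.resetVal .hole t h⟩
    · exact ⟨_, Red.capture .hole E k s⟩
    · exact ⟨_, red_reset h⟩
  | app t u iht ihu =>
    right
    have h := ht
    simp only [Closed, Tm.fv, Finset.union_eq_empty] at h
    rcases iht h.1 with hv | ⟨E, k, s, rfl⟩ | ⟨t', h'⟩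
    · rcases ihu h.2 with hu | ⟨E, k, s, rfl⟩ | ⟨u', h'⟩
      · cases hv with
        | var x => simp [Tm.fv] at h
        | lam x b => exact Or.inr ⟨_, Red.beta .hole x b u hu⟩
      · exact Or.inl ⟨.appR t hv E, k, s, rfl⟩
      · exact Or.inr ⟨_, red_appR hv h'⟩
    · exact Or.inl ⟨.appL E u, k, s, rfl⟩
    · exact Or.inr ⟨_, red_appL u h'⟩

/-- For closed terms, evaluation ends in a value or a control-stuck term. -/
theorem evals_iff {t : Tm} (ht : Closed t) :
    (∃ t', Evals t t') ↔ EvalsToValue t ∨ EvalsToStuck t := by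
  constructor
  · rintro ⟨t', hr, hn⟩
    rcases progress t' (reds_closed hr ht) with h | h | ⟨u, h⟩
    · exact Or.inl ⟨t', hr, h⟩
    · exact Or.inr ⟨t', hr, h⟩
    · rcases hn with hn | hn
      · have := red_step h
        rw [step_value hn] at this; cases this
      · exact absurd h (hn.2 u)
  · rintro (⟨t', hr, h⟩ | ⟨t', hr, h⟩)
    · exact ⟨t', hr, Or.inl h⟩
    · exact ⟨t', hr, controlStuck_normal h⟩

theorem red_unique : Relator.RightUnique Red := by
  intro a b c h1 h2
  have := (red_step h1).symm.trans (red_step h2)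
  exact Option.some.inj this

theorem red_Omega : Red OmegaTm OmegaTm := by
  have := Red.beta .hole 0 (Tm.app (Tm.var 0) (Tm.var 0)) omegaTm (.lam _ _)
  simpa [FCtx.plug, Tm.subst, OmegaTm, omegaTm] using this

theorem normal_no_red {t t' : Tm} (hn : NormalForm t) (h : Red t t') : False := by
  rcases hn with hn | hn
  · have := red_step h
    rw [step_value hn] at this; cases this
  · exact hn.2 _ h

/-- A term that reduces to Ω does not evaluate. -/
theorem diverges {t : Tm} (h : Relation.ReflTransGen Red t OmegaTm) : ¬ ∃ t', Evals t t' := by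
  rintro ⟨t', hr, hn⟩
  rcases Relation.ReflTransGen.total_of_right_unique red_unique h hr with h' | h'
  · have : t' = OmegaTm := by
      clear hr hn
      induction h' with
      | refl => rfl
      | tail _ h ih => subst ih; exact red_unique h red_Omega
    subst this
    exact normal_no_red hn red_Omega
  · rcases Relation.ReflTransGen.cases_head h' with rfl | ⟨c, hc, _⟩
    · exact normal_no_red hn red_Omega
    · exact normal_no_red hn hc

/-- The function `λx.Ω`. -/
def kOmega : Tm := .lam 0 OmegaTm

theorem reds_kOmega {t t' : Tm} (h : Relation.ReflTransGen Red t t') :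
    Relation.ReflTransGen Red (.app kOmega t) (.app kOmega t') := by
  induction h with
  | refl => exact .refl
  | tail _ h ih => exact ih.tail (red_appR (.lam _ _) h)

theorem value_diverges {t : Tm} (h : EvalsToValue t) : ¬ ∃ t', Evals (.app kOmega t) t' := by
  obtain ⟨v, hr, hv⟩ := h
  refine diverges ((reds_kOmega hr).tail ?_)
  have := Red.beta .hole 0 OmegaTm v hv
  simpa [FCtx.plug, Tm.subst, OmegaTm, omegaTm, kOmega] using this

theorem stuck_terminates {t : Tm} (h : EvalsToStuck t) : ∃ t', Evals (.app kOmega t) t' := by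
  obtain ⟨s, hr, E, k, b, rfl⟩ := h
  exact ⟨_, reds_kOmega hr, controlStuck_normal ⟨.appR kOmega (.lam _ _) E, k, b, rfl⟩⟩

theorem cplug_closed {C : Ctx} {t : Tm} (hC : C.fv = ∅) (ht : Closed t) : Closed (C.plug t) := by
  have := fv_cplug C t
  rw [hC, ht] at this
  exact Finset.subset_empty.1 this

theorem half {t0 t1 : Tm} (h1 : Closed t1)
    (H : ∀ C : Ctx, C.fv = ∅ →
        ((∃ t', Evals (C.plug t0) t') ↔ (∃ t', Evals (C.plug t1) t')))
    (h0 : Closed t0) (C : Ctx) (hC : C.fv = ∅) :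
    (EvalsToValue (C.plug t0) → EvalsToValue (C.plug t1)) ∧
    (EvalsToStuck (C.plug t0) → EvalsToStuck (C.plug t1)) := by
  have a := H C hC
  rw [evals_iff (cplug_closed hC h0), evals_iff (cplug_closed hC h1)] at a
  have b := H (.appR kOmega C) (by simp [Ctx.fv, hC, kOmega, OmegaTm, omegaTm, Tm.fv])
  simp only [Ctx.plug] at b
  constructor
  · intro h
    rcases a.1 (Or.inl h) with h' | h'
    · exact h'
    · exact absurd (b.2 (stuck_terminates h')) (value_diverges h)
  · intro h
    rcases a.1 (Or.inr h) with h' | h'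
    · exact absurd (b.1 (stuck_terminates h)) (value_diverges h')
    · exact h'

/-- For closed terms, contextual equivalence ≈₂ (testing
evaluation to values and to control-stuck terms separately) coincides with
observing, in every closed context, mere evaluation to some normal form. -/
theorem ctxEquiv_iff_termination (t0 t1 : Tm) (h0 : Closed t0) (h1 : Closed t1) :
    CtxEquiv t0 t1 ↔
      (∀ C : Ctx, C.fv = ∅ →
        ((∃ t', Evals (C.plug t0) t') ↔ (∃ t', Evals (C.plug t1) t'))) := by
  constructor
  · intro H C hC
    rw [evals_iff (cplug_closed hC h0), evals_iff (cplug_closed hC h1), (H C hC).1, (H C hC).2]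
  · intro H C hC
    have a := half h1 H h0 C hC
    have b := half h0 (fun C hC => (H C hC).symm) h1 C hC
    exact ⟨⟨a.1, b.1⟩, ⟨a.2, b.2⟩⟩

end LambdaS
end

section
/- In the calculus λ_S, the terms S k.Ω and Ω are related by the contextual equivalence ≈₁ that observes only evaluation to values: for every closed context C, C[S k.Ω] evaluates to a value if and only if C[Ω] evaluates to a value. -/
namespace LambdaS

theorem fresh_notin (s : Finset ℕ) : fresh s ∉ s := by
  unfold fresh
  split
  · rename_i h
    intro hm
    have := s.le_max' _ hm
    omega
  · rename_i h
    intro hm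
    exact h ⟨_, hm⟩

/-- α-variants of ω. -/
def IsW (t : Tm) : Prop := ∃ a, t = Tm.lam a (Tm.app (Tm.var a) (Tm.var a))

/-- α-variants of Ω. -/
def IsOm (t : Tm) : Prop := ∃ u w, IsW u ∧ IsW w ∧ t = Tm.app u w

/-- α-variants of Ω or of S k.Ω. -/
def IsB (t : Tm) : Prop := IsOm t ∨ ∃ k u, IsOm u ∧ t = Tm.shift k u

theorem IsW.fv {t : Tm} (h : IsW t) : t.fv = ∅ := by
  obtain ⟨a, rfl⟩ := h
  simp [Tm.fv]

theorem IsOm.fv {t : Tm} (h : IsOm t) : t.fv = ∅ := by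
  obtain ⟨u, w, hu, hw, rfl⟩ := h
  simp [Tm.fv, hu.fv, hw.fv]

theorem IsB.fv {t : Tm} (h : IsB t) : t.fv = ∅ := by
  rcases h with h | ⟨k, u, hu, rfl⟩
  · exact h.fv
  · simp [Tm.fv, hu.fv]

theorem IsW.rename {t : Tm} (h : IsW t) (y z : ℕ) : IsW (t.rename y z) := by
  obtain ⟨a, rfl⟩ := h
  by_cases hay : a = y <;> simp [Tm.rename, hay, IsW]

theorem IsOm.rename {t : Tm} (h : IsOm t) (y z : ℕ) : IsOm (t.rename y z) := by
  obtain ⟨u, w, hu, hw, rfl⟩ := h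
  exact ⟨_, _, hu.rename y z, hw.rename y z, by simp [Tm.rename]⟩

theorem IsB.rename {t : Tm} (h : IsB t) (y z : ℕ) : IsB (t.rename y z) := by
  rcases h with h | ⟨k, u, hu, rfl⟩
  · exact Or.inl (h.rename y z)
  · right
    simp only [Tm.rename]
    split
    · exact ⟨k, u, hu, rfl⟩
    · exact ⟨k, _, hu.rename y z, rfl⟩

theorem IsW.subst {t : Tm} (h : IsW t) (x : ℕ) (v : Tm) : IsW (t.subst x v) := by
  obtain ⟨a, rfl⟩ := h
  rw [Tm.subst]
  split
  · exact ⟨a, rfl⟩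
  · rename_i hax
    split
    · have hf := fresh_notin (v.fv ∪ (Tm.app (Tm.var a) (Tm.var a)).fv ∪ {x})
      generalize fresh (v.fv ∪ (Tm.app (Tm.var a) (Tm.var a)).fv ∪ {x}) = f at hf ⊢
      have hfx : f ≠ x := by
        rintro rfl
        simp at hf
      refine ⟨f, ?_⟩
      simp [Tm.rename, Tm.subst, hfx]
    · exact ⟨a, by simp [Tm.subst, hax]⟩

theorem IsOm.subst {t : Tm} (h : IsOm t) (x : ℕ) (v : Tm) : IsOm (t.subst x v) := by
  obtain ⟨u, w, hu, hw, rfl⟩ := h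
  exact ⟨_, _, hu.subst x v, hw.subst x v, by simp [Tm.subst]⟩

theorem IsB.subst {t : Tm} (h : IsB t) (x : ℕ) (v : Tm) : IsB (t.subst x v) := by
  rcases h with h | ⟨k, u, hu, rfl⟩
  · exact Or.inl (h.subst x v)
  · right
    rw [Tm.subst]
    split
    · exact ⟨k, u, hu, rfl⟩
    · split
      · exact ⟨_, _, (hu.rename _ _).subst _ _, rfl⟩
      · exact ⟨_, _, hu.subst _ _, rfl⟩

/-- Compatible closure relating all α-variants of Ω and S k.Ω. -/
inductive Rel : Tm → Tm → Prop
  | base {s t : Tm} : IsB s → IsB t → Rel s t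
  | var (x : ℕ) : Rel (Tm.var x) (Tm.var x)
  | lam (x : ℕ) {s t : Tm} : Rel s t → Rel (Tm.lam x s) (Tm.lam x t)
  | app {s t s2 t2 : Tm} : Rel s t → Rel s2 t2 → Rel (Tm.app s s2) (Tm.app t t2)
  | shift (x : ℕ) {s t : Tm} : Rel s t → Rel (Tm.shift x s) (Tm.shift x t)
  | reset {s t : Tm} : Rel s t → Rel (Tm.reset s) (Tm.reset t)

theorem Rel.refl (t : Tm) : Rel t t := by
  induction t with
  | var x => exact .var x
  | lam x t ih => exact .lam x ih
  | app t u iht ihu => exact .app iht ihu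
  | shift x t ih => exact .shift x ih
  | reset t ih => exact .reset ih

theorem Rel.symm {s t : Tm} (h : Rel s t) : Rel t s := by
  induction h with
  | base h1 h2 => exact .base h2 h1
  | var x => exact .var x
  | lam x _ ih => exact .lam x ih
  | app _ _ ih1 ih2 => exact .app ih1 ih2
  | shift x _ ih => exact .shift x ih
  | reset _ ih => exact .reset ih

theorem Rel.fv {s t : Tm} (h : Rel s t) : s.fv = t.fv := by
  induction h with
  | base h1 h2 => rw [h1.fv, h2.fv]
  | var x => rfl
  | lam x _ ih => simp [Tm.fv, ih]
  | app _ _ ih1 ih2 => simp [Tm.fv, ih1, ih2]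
  | shift x _ ih => simp [Tm.fv, ih]
  | reset _ ih => simp [Tm.fv, ih]

theorem Rel.rename {s t : Tm} (h : Rel s t) (y z : ℕ) :
    Rel (s.rename y z) (t.rename y z) := by
  induction h with
  | base h1 h2 => exact .base (h1.rename y z) (h2.rename y z)
  | var x => exact Rel.refl _
  | lam x h ih =>
    simp only [Tm.rename]
    split
    · exact .lam x h
    · exact .lam x ih
  | app _ _ ih1 ih2 => exact .app ih1 ih2
  | shift x h ih =>
    simp only [Tm.rename]
    split
    · exact .shift x h
    · exact .shift x ih
  | reset _ ih => exact .reset ih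

theorem Rel.subst_aux (x : ℕ) {v w : Tm} (hv : Rel v w) (n : ℕ) :
    ∀ s t : Tm, s.size ≤ n → Rel s t → Rel (s.subst x v) (t.subst x w) := by
  induction n with
  | zero => intro s t hs; cases s <;> simp [Tm.size] at hs
  | succ n ih =>
    intro s t hs h
    cases h with
    | base h1 h2 => exact .base (h1.subst _ _) (h2.subst _ _)
    | var y =>
      simp only [Tm.subst]
      split
      · exact hv
      · exact .var y
    | lam y h =>
      simp only [Tm.size] at hs
      rw [Tm.subst, Tm.subst, ← hv.fv, ← h.fv]
      split
      · exact .lam y h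
      · split
        · exact .lam _ (ih _ _ (by rw [Tm.size_rename]; omega) (h.rename _ _))
        · exact .lam _ (ih _ _ (by omega) h)
    | app h1 h2 =>
      simp only [Tm.size] at hs
      rw [Tm.subst, Tm.subst]
      exact .app (ih _ _ (by omega) h1) (ih _ _ (by omega) h2)
    | shift y h =>
      simp only [Tm.size] at hs
      rw [Tm.subst, Tm.subst, ← hv.fv, ← h.fv]
      split
      · exact .shift y h
      · split
        · exact .shift _ (ih _ _ (by rw [Tm.size_rename]; omega) (h.rename _ _))
        · exact .shift _ (ih _ _ (by omega) h)
    | reset h =>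
      simp only [Tm.size] at hs
      rw [Tm.subst, Tm.subst]
      exact .reset (ih _ _ (by omega) h)

theorem Rel.subst {s t : Tm} (h : Rel s t) (x : ℕ) {v w : Tm} (hv : Rel v w) :
    Rel (s.subst x v) (t.subst x w) :=
  Rel.subst_aux x hv _ s t le_rfl h

theorem IsB.not_value {t : Tm} (h : IsB t) : ¬ IsValue t := by
  rcases h with ⟨u, w, _, _, rfl⟩ | ⟨k, u, _, rfl⟩ <;> intro h <;> cases h

theorem Rel.value {s t : Tm} (h : Rel s t) (hs : IsValue s) : IsValue t := by
  cases h with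
  | base h1 _ => exact absurd hs h1.not_value
  | var x => exact .var x
  | lam x _ => exact .lam x _
  | app _ _ => cases hs
  | shift _ _ => cases hs
  | reset _ => cases hs

/-- Structural presentation of the reduction relation. -/
inductive Step : Tm → Tm → Prop
  | beta (x : ℕ) (t v : Tm) : IsValue v → Step (Tm.app (Tm.lam x t) v) (t.subst x v)
  | capture (E : ECtx) (k : ℕ) (t : Tm) :
      Step (Tm.reset (E.plug (Tm.shift k t))) (Tm.reset (t.subst k (contFun E)))
  | resetVal (v : Tm) : IsValue v → Step (Tm.reset v) v
  | appL {t s : Tm} (u : Tm) : Step t s → Step (Tm.app t u) (Tm.app s u)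
  | appR {t s : Tm} (v : Tm) : IsValue v → Step t s → Step (Tm.app v t) (Tm.app v s)
  | reset {t s : Tm} : Step t s → Step (Tm.reset t) (Tm.reset s)

theorem Step.plug (F : FCtx) {t s : Tm} (h : Step t s) : Step (F.plug t) (F.plug s) := by
  induction F with
  | hole => exact h
  | appR v hv F ih => exact .appR v hv ih
  | appL F u ih => exact .appL u ih
  | reset F ih => exact .reset ih

theorem Red.step {t s : Tm} (h : Red t s) : Step t s := by
  cases h with
  | beta F x t v hv => exact (Step.beta x t v hv).plug F
  | capture F E k t => exact (Step.capture E k t).plug F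
  | resetVal F v hv => exact (Step.resetVal v hv).plug F

theorem Step.red {t s : Tm} (h : Step t s) : Red t s := by
  induction h with
  | beta x t v hv => exact Red.beta .hole x t v hv
  | capture E k t => exact Red.capture .hole E k t
  | resetVal v hv => exact Red.resetVal .hole v hv
  | appL u _ ih =>
    cases ih with
    | beta F x t v hv => exact Red.beta (.appL F u) x t v hv
    | capture F E k t => exact Red.capture (.appL F u) E k t
    | resetVal F v hv => exact Red.resetVal (.appL F u) v hv
  | appR w hw _ ih =>
    cases ih with
    | beta F x t v hv => exact Red.beta (.appR w hw F) x t v hv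
    | capture F E k t => exact Red.capture (.appR w hw F) E k t
    | resetVal F v hv => exact Red.resetVal (.appR w hw F) v hv
  | reset _ ih =>
    cases ih with
    | beta F x t v hv => exact Red.beta (.reset F) x t v hv
    | capture F E k t => exact Red.capture (.reset F) E k t
    | resetVal F v hv => exact Red.resetVal (.reset F) v hv

/-- Terms with Ω or S k.Ω in evaluation position. -/
inductive Bad : Tm → Prop
  | base {t : Tm} : IsB t → Bad t
  | appL {t : Tm} (u : Tm) : Bad t → Bad (Tm.app t u)
  | appR {t : Tm} (v : Tm) : IsValue v → Bad t → Bad (Tm.app v t)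
  | reset {t : Tm} : Bad t → Bad (Tm.reset t)

theorem Bad.not_value {t : Tm} (h : Bad t) : ¬ IsValue t := by
  cases h with
  | base h => exact h.not_value
  | appL u h => intro h; cases h
  | appR v hv h => intro h; cases h
  | reset h => intro h; cases h

theorem Step.not_value {t s : Tm} (h : Step t s) : ¬ IsValue t := by
  cases h <;> intro h <;> cases h

theorem plug_shift_not_value (E : ECtx) (k : ℕ) (t : Tm) :
    ¬ IsValue (E.plug (Tm.shift k t)) := by
  cases E <;> intro h <;> cases h

theorem IsW.value {t : Tm} (h : IsW t) : IsValue t := by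
  obtain ⟨a, rfl⟩ := h
  exact .lam _ _

theorem isB_app {t u : Tm} (h : IsB (Tm.app t u)) : IsW t ∧ IsW u := by
  rcases h with ⟨a, b, ha, hb, h⟩ | ⟨k, u, _, h⟩
  · cases h
    exact ⟨ha, hb⟩
  · cases h

theorem Bad.plug_shift (E : ECtx) (k : ℕ) (t : Tm) (h : Bad (E.plug (Tm.shift k t))) :
    IsOm t := by
  induction E with
  | hole =>
    cases h with
    | base h =>
      rcases h with ⟨u, w, _, _, h⟩ | ⟨k, u, hu, h⟩
      · cases h
      · cases h
        exact hu
  | appR v hv E ih =>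
    cases h with
    | base h => exact absurd (isB_app h).2.value (plug_shift_not_value _ _ _)
    | appL _ h => exact absurd hv h.not_value
    | appR _ _ h => exact ih h
  | appL E u ih =>
    cases h with
    | base h => exact absurd (isB_app h).1.value (plug_shift_not_value _ _ _)
    | appL _ h => exact ih h
    | appR _ hv h => exact absurd hv (plug_shift_not_value _ _ _)

theorem Bad.step {t s : Tm} (h : Step t s) : Bad t → Bad s := by
  induction h with
  | beta x t v hv =>
    intro h
    cases h with
    | base h =>
      obtain ⟨⟨a, ha⟩, hw⟩ := isB_app h
      cases ha
      refine .base (Or.inl ⟨v, v, hw, hw, ?_⟩)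
      simp [Tm.subst]
    | appL _ h => exact absurd (IsValue.lam _ _) h.not_value
    | appR _ _ h => exact absurd hv h.not_value
  | capture E k t =>
    intro h
    cases h with
    | base h => rcases h with ⟨u, w, _, _, h⟩ | ⟨k, u, hu, h⟩ <;> cases h
    | reset h => exact .reset (.base (Or.inl ((Bad.plug_shift E k t h).subst _ _)))
  | resetVal v hv =>
    intro h
    cases h with
    | base h => rcases h with ⟨u, w, _, _, h⟩ | ⟨k, u, hu, h⟩ <;> cases h
    | reset h => exact h
  | appL u hs ih =>
    intro h
    cases h with
    | base h => exact absurd (isB_app h).1.value hs.not_value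
    | appL _ h => exact .appL _ (ih h)
    | appR _ hv h => exact absurd hv hs.not_value
  | appR v hv hs ih =>
    intro h
    cases h with
    | base h => exact absurd (isB_app h).2.value hs.not_value
    | appL _ h => exact absurd hv h.not_value
    | appR _ _ h => exact .appR _ hv (ih h)
  | reset hs ih =>
    intro h
    cases h with
    | base h => rcases h with ⟨u, w, _, _, h⟩ | ⟨k, u, hu, h⟩ <;> cases h
    | reset h => exact .reset (ih h)

theorem Bad.diverges {t v : Tm} (h : Bad t) (hs : Relation.ReflTransGen Red t v) : Bad v := by
  induction hs with
  | refl => exact h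
  | tail _ hr ih => exact Bad.step hr.step ih

theorem Rel.plug_shift (E : ECtx) (k : ℕ) (t : Tm) :
    ∀ s, Rel (E.plug (Tm.shift k t)) s → Bad (E.plug (Tm.shift k t)) ∨
      ∃ (E2 : ECtx) (t2 : Tm), s = E2.plug (Tm.shift k t2) ∧ Rel t t2 ∧ E.fv = E2.fv ∧
        ∀ w, Rel (E.plug w) (E2.plug w) := by
  induction E with
  | hole =>
    intro s h
    cases h with
    | base h _ => exact Or.inl (.base h)
    | shift _ h => exact Or.inr ⟨.hole, _, rfl, h, rfl, Rel.refl⟩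
  | appR v hv E ih =>
    intro s h
    cases h with
    | base h _ => exact Or.inl (.base h)
    | app h1 h2 =>
      rcases ih _ h2 with h | ⟨E2, t2, rfl, ht, hf, hE⟩
      · exact Or.inl (.appR _ hv h)
      · exact Or.inr ⟨.appR _ (h1.value hv) E2, t2, rfl, ht, by simp [ECtx.fv, hf, h1.fv],
          fun w => .app h1 (hE w)⟩
  | appL E u ih =>
    intro s h
    cases h with
    | base h _ => exact Or.inl (.base h)
    | app h1 h2 =>
      rcases ih _ h1 with h | ⟨E2, t2, rfl, ht, hf, hE⟩
      · exact Or.inl (.appL _ h)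
      · exact Or.inr ⟨.appL E2 _, t2, rfl, ht, by simp [ECtx.fv, hf, h2.fv],
          fun w => .app (hE w) h2⟩

theorem Rel.step {s s2 : Tm} (hs : Step s s2) :
    ∀ t, Rel s t → Bad s ∨ ∃ t2, Step t t2 ∧ Rel s2 t2 := by
  induction hs with
  | beta x b v hv =>
    intro t h
    cases h with
    | base h _ => exact Or.inl (.base h)
    | app h1 h2 =>
      cases h1 with
      | base h _ => exact absurd (IsValue.lam _ _) h.not_value
      | lam _ h1 => exact Or.inr ⟨_, .beta _ _ _ (h2.value hv), h1.subst _ h2⟩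
  | capture E k b =>
    intro t h
    cases h with
    | base h _ => exact Or.inl (.base h)
    | reset h =>
      rcases Rel.plug_shift E k b _ h with h | ⟨E2, t2, rfl, ht, hf, hE⟩
      · exact Or.inl (.reset h)
      · refine Or.inr ⟨_, .capture E2 k t2, .reset (ht.subst _ ?_)⟩
        unfold contFun
        rw [hf]
        exact .lam _ (.reset (hE _))
  | resetVal v hv =>
    intro t h
    cases h with
    | base h _ => exact Or.inl (.base h)
    | reset h => exact Or.inr ⟨_, .resetVal _ (h.value hv), h⟩
  | appL u hs ih =>
    intro t h
    cases h with
    | base h _ => exact Or.inl (.base h)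
    | app h1 h2 =>
      rcases ih _ h1 with h | ⟨t2, ht, hr⟩
      · exact Or.inl (.appL _ h)
      · exact Or.inr ⟨_, .appL _ ht, .app hr h2⟩
  | appR v hv hs ih =>
    intro t h
    cases h with
    | base h _ => exact Or.inl (.base h)
    | app h1 h2 =>
      rcases ih _ h2 with h | ⟨t2, ht, hr⟩
      · exact Or.inl (.appR _ hv h)
      · exact Or.inr ⟨_, .appR _ (h1.value hv) ht, .app h1 hr⟩
  | reset hs ih =>
    intro t h
    cases h with
    | base h _ => exact Or.inl (.base h)
    | reset h =>
      rcases ih _ h with h | ⟨t2, ht, hr⟩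
      · exact Or.inl (.reset h)
      · exact Or.inr ⟨_, .reset ht, .reset hr⟩

theorem Rel.evals {s t : Tm} (h : Rel s t) (he : EvalsToValue s) : EvalsToValue t := by
  obtain ⟨v, hs, hv⟩ := he
  induction hs using Relation.ReflTransGen.head_induction_on generalizing t with
  | refl => exact ⟨t, .refl, h.value hv⟩
  | head hr hrest ih =>
    rcases Rel.step hr.step _ h with hb | ⟨t2, ht, hrel⟩
    · exact absurd hv (Bad.diverges (Bad.step hr.step hb) hrest).not_value
    · obtain ⟨w, hw, hwv⟩ := ih hrel
      exact ⟨w, .head ht.red hw, hwv⟩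

theorem Rel.plug (C : Ctx) {s t : Tm} (h : Rel s t) : Rel (C.plug s) (C.plug t) := by
  induction C with
  | hole => exact h
  | lam x C ih => exact .lam x ih
  | appL C u ih => exact .app ih (.refl u)
  | appR u C ih => exact .app (.refl u) ih
  | shift k C ih => exact .shift k ih
  | reset C ih => exact .reset ih

/-- `S k.Ω` and `Ω` are related by the contextual equivalence ≈₁
that observes only evaluation to values. -/
theorem shift_Omega_ctxEquiv_one :
    ∀ C : Ctx, C.fv = ∅ →
      (EvalsToValue (C.plug (Tm.shift 0 OmegaTm)) ↔ EvalsToValue (C.plug OmegaTm)) := by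
  intro C _
  have hO : IsOm OmegaTm := ⟨omegaTm, omegaTm, ⟨0, rfl⟩, ⟨0, rfl⟩, rfl⟩
  have h : Rel (Tm.shift 0 OmegaTm) OmegaTm :=
    .base (Or.inr ⟨0, OmegaTm, hO, rfl⟩) (Or.inl hO)
  exact ⟨(Rel.plug C h).evals, (Rel.plug C h.symm).evals⟩

end LambdaS
end
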